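/- Let f : (C,P,∂) → (D,Q,∂') be a morphism of crossed modules with components f₁ : C → D, f₀ : P → Q, and let L' be a crossed D-algebra. Define the pullback f₀*(L') with graded pieces (f₀*L')_p = L'_{f₀(p)}, pairing inherited from L' on pieces of inverse grade (zero otherwise), action φ_h := φ'_{f₀(h)}, and c̃ := (f₁(c))~ placed in grade ∂c. Then f₀*(L') is a crossed C-algebra. -/

import Mathlib

/-- A crossed module structure: a group `P` acting on a group `C` (via `ψ : P →* MulAut C`)
together with a homomorphism `δ : C →* P` satisfying equivariance and the Peiffer identity. -/
structure IsCrossedModule {C P : Type*} [Group C] [Group P]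
    (ψ : P →* MulAut C) (δ : C →* P) : Prop where
  equivariance : ∀ (p : P) (c : C), δ (ψ p c) = p * δ c * p⁻¹
  peiffer : ∀ (c c' : C), ψ (δ c) c' = c * c' * c⁻¹

/-- A crossed `P`-algebra over a field `K`: a `P`-graded associative unital `K`-algebra with a
nondegenerate symmetric inner product and a `P`-action, satisfying Turaev's axioms. -/
structure CrossedPAlgebra (K : Type*) [Field K] (P : Type*) [Group P]
    (L : Type*) [Ring L] [Algebra K L] where
  grading : P → Submodule K L
  grading_indep : iSupIndep grading
  grading_supr : (⨆ p, grading p) = ⊤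
  mul_mem : ∀ (g h : P), ∀ a ∈ grading g, ∀ b ∈ grading h, a * b ∈ grading (g * h)
  one_mem : (1 : L) ∈ grading 1
  ρ : L →ₗ[K] L →ₗ[K] K
  ρ_symm : ∀ a b : L, ρ a b = ρ b a
  ρ_graded : ∀ (g h : P), g * h ≠ 1 → ∀ a ∈ grading g, ∀ b ∈ grading h, ρ a b = 0
  ρ_nondeg : ∀ (g : P), ∀ a ∈ grading g, (∀ b ∈ grading g⁻¹, ρ a b = 0) → a = 0
  ρ_mul_assoc : ∀ a b c : L, ρ (a * b) c = ρ a (b * c)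
  φ : P →* (L ≃ₐ[K] L)
  φ_grading : ∀ (g h : P), ∀ a ∈ grading h, φ g a ∈ grading (g * h * g⁻¹)
  φ_ρ : ∀ (g : P) (a b : L), ρ (φ g a) (φ g b) = ρ a b
  φ_fix : ∀ (g : P), ∀ a ∈ grading g, φ g a = a
  φ_comm : ∀ (g h : P), ∀ a ∈ grading g, ∀ b ∈ grading h, (φ h) a * b = b * a

/-- A crossed `𝒞`-algebra over a crossed module `(C, P, δ)` (with action `ψ`): a crossed
`P`-algebra together with distinguished elements `c̃ ∈ L_{δ c}` for `c ∈ C`. -/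
structure CrossedAlgebra (K : Type*) [Field K] {C P : Type*} [Group C] [Group P]
    (ψ : P →* MulAut C) (δ : C →* P) (L : Type*) [Ring L] [Algebra K L]
    extends CrossedPAlgebra K P L where
  tilde : C → L
  tilde_mem : ∀ c : C, tilde c ∈ grading (δ c)
  tilde_one : tilde 1 = 1
  tilde_mul : ∀ c c' : C, tilde (c * c') = tilde c * tilde c'
  φ_tilde : ∀ (h : P) (c : C), φ h (tilde c) = tilde (ψ h c)

open DirectSum

namespace CrossedPAlgebra

variable {K : Type*} [Field K] {P Q : Type*} [Group P] [Group Q]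
  {L : Type*} [Ring L] [Algebra K L]

/-- The family of graded pieces of the pullback of a crossed algebra along `f`. -/
abbrev pullbackGrading (A : CrossedPAlgebra K Q L) (f : P →* Q) : Additive P → Submodule K L :=
  fun a => A.grading (f (Additive.toMul a))

instance (A : CrossedPAlgebra K Q L) (f : P →* Q) :
    SetLike.GradedMonoid (A.pullbackGrading f) where
  one_mem := by
    show (1 : L) ∈ A.grading (f (1 : P))
    rw [map_one]; exact A.one_mem
  mul_mem {i j} {gi gj} hi hj := by
    show gi * gj ∈ A.grading (f (Additive.toMul i * Additive.toMul j))
    rw [map_mul]; exact A.mul_mem _ _ _ hi _ hj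

namespace Pullback

variable {A : CrossedPAlgebra K Q L} {f : P →* Q}

theorem map_mem (h p : P) {x : L} (hx : x ∈ A.grading (f p)) :
    A.φ (f h) x ∈ A.grading (f (h * p * h⁻¹)) := by
  simpa using A.φ_grading (f h) (f p) x hx

variable [DecidableEq (Additive P)]

variable (A f)

/-- The homogeneous element of grade `p` given by `x`. -/
def single (p : P) (x : L) (hx : x ∈ A.grading (f p)) : ⨁ a, A.pullbackGrading f a :=
  DirectSum.lof K (Additive P) (fun a => A.pullbackGrading f a) (Additive.ofMul p) ⟨x, hx⟩

variable {A f}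

theorem single_congr {p q : P} {x y : L} {hx : x ∈ A.grading (f p)} (hpq : p = q) (hxy : x = y) :
    single A f p x hx = single A f q y (hpq ▸ hxy ▸ hx) := by
  subst hpq hxy; rfl

theorem single_zero (p : P) (h : (0 : L) ∈ A.grading (f p)) : single A f p 0 h = 0 :=
  map_zero (DirectSum.lof K (Additive P) (fun a => A.pullbackGrading f a) (Additive.ofMul p))

theorem single_apply_self (p : P) (x : L) (hx : x ∈ A.grading (f p)) :
    ((single A f p x hx (Additive.ofMul p) : A.pullbackGrading f (Additive.ofMul p)) : L) = x :=
  congrArg Subtype.val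
    (DirectSum.of_eq_same (β := fun a => A.pullbackGrading f a) (Additive.ofMul p) ⟨x, hx⟩)

theorem single_apply_of_ne {p q : P} (h : p ≠ q) (x : L) (hx : x ∈ A.grading (f p)) :
    single A f p x hx (Additive.ofMul q) = 0 :=
  DirectSum.of_eq_of_ne _ _ _ (fun e => h (Additive.ofMul.injective e).symm)

theorem one_eq_single :
    (1 : ⨁ a, A.pullbackGrading f a) =
      single A f 1 1 (by rw [map_one]; exact A.one_mem) := rfl

theorem single_mul_single (p q : P) (x y : L) (hx : x ∈ A.grading (f p))
    (hy : y ∈ A.grading (f q)) :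
    single A f p x hx * single A f q y hy =
      single A f (p * q) (x * y) (by rw [map_mul]; exact A.mul_mem _ _ _ hx _ hy) :=
  DirectSum.of_mul_of _ _

theorem induction_on {M : (⨁ a, A.pullbackGrading f a) → Prop} (x : ⨁ a, A.pullbackGrading f a)
    (h0 : M 0) (hs : ∀ p x hx, M (single A f p x hx)) (ha : ∀ x y, M x → M y → M (x + y)) :
    M x :=
  DirectSum.induction_on x h0 (fun i y => hs (Additive.toMul i) y y.2) ha

variable (A f)

/-- The action of `h` on a graded piece of the pullback. -/
def actLinear (h : P) (i : Additive P) :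
    A.pullbackGrading f i →ₗ[K] ⨁ a, A.pullbackGrading f a :=
  DirectSum.lof K (Additive P) (fun a => A.pullbackGrading f a)
      (Additive.ofMul (h * Additive.toMul i * h⁻¹)) ∘ₗ
    ((A.φ (f h)).toLinearMap ∘ₗ (A.pullbackGrading f i).subtype).codRestrict _
      (fun x => map_mem h (Additive.toMul i) x.2)

/-- The action of `h` on the pullback, as an algebra homomorphism. -/
def act (h : P) : (⨁ a, A.pullbackGrading f a) →ₐ[K] ⨁ a, A.pullbackGrading f a :=
  DirectSum.toAlgebra K (fun a => A.pullbackGrading f a) (actLinear A f h)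
    (by
      rw [one_eq_single]
      exact single_congr (hx := map_mem h 1 (by rw [map_one]; exact A.one_mem))
        (by simp) (map_one (A.φ (f h))))
    (fun {i j} x y => by
      refine Eq.trans ?_ (single_mul_single _ _ _ _ (map_mem h (Additive.toMul i) x.2)
        (map_mem h (Additive.toMul j) y.2)).symm
      exact single_congr (hx := map_mem h (Additive.toMul i * Additive.toMul j)
          (by rw [map_mul]; exact A.mul_mem _ _ _ x.2 _ y.2))
        (by group) (map_mul (A.φ (f h)) (x : L) (y : L)))

/-- The linear form `x ↦ ρ(x₁, 1)` on the pullback, where `x₁` is the component of grade `1`. -/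
def trace : (⨁ a, A.pullbackGrading f a) →ₗ[K] K :=
  A.ρ.flip 1 ∘ₗ (A.pullbackGrading f 0).subtype ∘ₗ
    DirectSum.component K (Additive P) (fun a => A.pullbackGrading f a) 0

variable {A f}

theorem act_single (h p : P) (x : L) (hx : x ∈ A.grading (f p)) :
    act A f h (single A f p x hx) =
      single A f (h * p * h⁻¹) (A.φ (f h) x) (map_mem h p hx) :=
  DirectSum.toModule_lof K (Additive.ofMul p) _

theorem act_one (x : ⨁ a, A.pullbackGrading f a) : act A f 1 x = x := by
  induction x using induction_on with
  | h0 => simp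
  | hs p x hx => rw [act_single]; exact single_congr (by simp) (by simp)
  | ha x y hx hy => rw [map_add, hx, hy]

theorem act_mul (g h : P) (x : ⨁ a, A.pullbackGrading f a) :
    act A f (g * h) x = act A f g (act A f h x) := by
  induction x using induction_on with
  | h0 => simp
  | hs p x hx =>
    rw [act_single, act_single, act_single]
    exact single_congr (by group) (by simp)
  | ha x y hx hy => simp only [map_add, hx, hy]

theorem trace_single_one (x : L) (hx : x ∈ A.grading (f 1)) :
    trace A f (single A f 1 x hx) = A.ρ x 1 :=
  congrArg (fun z => A.ρ z 1) (single_apply_self 1 x hx)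

theorem trace_single_of_ne {p : P} (hp : p ≠ 1) (x : L) (hx : x ∈ A.grading (f p)) :
    trace A f (single A f p x hx) = 0 := by
  have h : single A f p x hx 0 = 0 := single_apply_of_ne hp x hx
  show A.ρ ((single A f p x hx 0 : A.pullbackGrading f 0) : L) 1 = 0
  rw [h]; simp

theorem trace_act (h : P) (x : ⨁ a, A.pullbackGrading f a) :
    trace A f (act A f h x) = trace A f x := by
  induction x using induction_on with
  | h0 => simp
  | hs p x hx =>
    rw [act_single]
    by_cases hp : p = 1
    · subst hp
      rw [trace_single_one, single_congr (q := 1) (by simp) rfl, trace_single_one]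
      simpa using A.φ_ρ (f h) x 1
    · rw [trace_single_of_ne hp, trace_single_of_ne (by simpa [mul_inv_eq_one] using hp)]
  | ha x y hx hy => simp only [map_add, hx, hy]

theorem trace_single_mul_single {p q : P} (hpq : p * q = 1) (x y : L)
    (hx : x ∈ A.grading (f p)) (hy : y ∈ A.grading (f q)) :
    trace A f (single A f p x hx * single A f q y hy) = A.ρ x y := by
  rw [single_mul_single, single_congr hpq rfl, trace_single_one, A.ρ_mul_assoc, mul_one]

theorem trace_mul_comm (x y : ⨁ a, A.pullbackGrading f a) :
    trace A f (x * y) = trace A f (y * x) := by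
  induction x using induction_on with
  | h0 => simp
  | ha x x' hx hx' => simp only [add_mul, mul_add, map_add, hx, hx']
  | hs p x hx =>
    induction y using induction_on with
    | h0 => simp
    | ha y y' hy hy' => simp only [add_mul, mul_add, map_add, hy, hy']
    | hs q y hy =>
      by_cases hpq : p * q = 1
      · rw [trace_single_mul_single hpq,
          trace_single_mul_single (mul_eq_one_comm.mp hpq), A.ρ_symm]
      · rw [single_mul_single, single_mul_single, trace_single_of_ne hpq,
          trace_single_of_ne (fun h => hpq (mul_eq_one_comm.mp h))]

variable (A f)

/-- The submodule of homogeneous elements of grade `p` in the pullback. -/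
def homogeneous (p : P) : Submodule K (⨁ a, A.pullbackGrading f a) :=
  LinearMap.range (DirectSum.lof K (Additive P) (fun a => A.pullbackGrading f a)
    (Additive.ofMul p))

variable {A f}

theorem mem_homogeneous {p : P} {z : ⨁ a, A.pullbackGrading f a} :
    z ∈ homogeneous A f p ↔ ∃ x hx, single A f p x hx = z :=
  ⟨fun ⟨x, hx⟩ => ⟨x, x.2, hx⟩, fun ⟨x, hx, h⟩ => ⟨⟨x, hx⟩, h⟩⟩

theorem single_mem_homogeneous {p q : P} (h : p = q) (x : L) (hx : x ∈ A.grading (f p)) :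
    single A f p x hx ∈ homogeneous A f q :=
  h ▸ mem_homogeneous.mpr ⟨x, hx, rfl⟩

theorem iSupIndep_homogeneous : iSupIndep (homogeneous A f) := by
  refine iSupIndep_def.mpr fun p => Submodule.disjoint_def.mpr fun z hz hz' => ?_
  obtain ⟨x, hx, rfl⟩ := mem_homogeneous.mp hz
  have hle : ⨆ q, ⨆ (_ : q ≠ p), homogeneous A f q ≤
      LinearMap.ker (DirectSum.component K (Additive P) (fun a => A.pullbackGrading f a)
        (Additive.ofMul p)) := by
    refine iSup₂_le fun q hq w hw => ?_
    obtain ⟨y, hy, rfl⟩ := mem_homogeneous.mp hw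
    exact single_apply_of_ne hq y hy
  have h0 : single A f p x hx (Additive.ofMul p) = 0 := hle hz'
  have hx0 : x = 0 := by rw [← single_apply_self p x hx, h0]; rfl
  subst hx0
  exact single_zero p hx

theorem iSup_homogeneous : ⨆ p, homogeneous A f p = ⊤ := by
  refine eq_top_iff.mpr fun z _ => ?_
  induction z using induction_on with
  | h0 => exact zero_mem _
  | hs p x hx => exact Submodule.mem_iSup_of_mem p (single_mem_homogeneous rfl x hx)
  | ha x y hx hy => exact add_mem (hx trivial) (hy trivial)

end Pullback

open _root_.CrossedPAlgebra.Pullback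

variable [DecidableEq (Additive P)]

/-- The pullback of a crossed `Q`-algebra along a group homomorphism `f : P →* Q`. -/
def pullback (A : CrossedPAlgebra K Q L) (f : P →* Q) :
    CrossedPAlgebra K P (⨁ a, A.pullbackGrading f a) where
  grading := homogeneous A f
  grading_indep := iSupIndep_homogeneous
  grading_supr := iSup_homogeneous
  mul_mem g h a ha b hb := by
    obtain ⟨x, hx, rfl⟩ := mem_homogeneous.mp ha
    obtain ⟨y, hy, rfl⟩ := mem_homogeneous.mp hb
    rw [single_mul_single]
    exact single_mem_homogeneous rfl _ _
  one_mem := single_mem_homogeneous rfl _ _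
  ρ := (LinearMap.mul K (⨁ a, A.pullbackGrading f a)).compr₂ (trace A f)
  ρ_symm := trace_mul_comm
  ρ_graded g h hgh a ha b hb := by
    obtain ⟨x, hx, rfl⟩ := mem_homogeneous.mp ha
    obtain ⟨y, hy, rfl⟩ := mem_homogeneous.mp hb
    exact (congrArg (trace A f) (single_mul_single g h x y hx hy)).trans
      (trace_single_of_ne hgh _ _)
  ρ_nondeg g a ha h := by
    obtain ⟨x, hx, rfl⟩ := mem_homogeneous.mp ha
    have hx0 : x = 0 := A.ρ_nondeg _ x hx fun y hy => by
      rw [← map_inv] at hy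
      rw [← trace_single_mul_single (mul_inv_cancel g) x y hx hy]
      exact h _ (single_mem_homogeneous rfl y hy)
    subst hx0
    exact single_zero g hx
  ρ_mul_assoc a b c := congrArg (trace A f) (mul_assoc a b c)
  φ :=
    { toFun := fun h => AlgEquiv.ofAlgHom (act A f h) (act A f h⁻¹)
        (AlgHom.ext fun x => by
          rw [AlgHom.comp_apply, ← act_mul, mul_inv_cancel, act_one, AlgHom.id_apply])
        (AlgHom.ext fun x => by
          rw [AlgHom.comp_apply, ← act_mul, inv_mul_cancel, act_one, AlgHom.id_apply])
      map_one' := AlgEquiv.ext act_one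
      map_mul' := fun g h => AlgEquiv.ext (act_mul g h) }
  φ_grading g h a ha := by
    obtain ⟨x, hx, rfl⟩ := mem_homogeneous.mp ha
    show act A f g (single A f h x hx) ∈ homogeneous A f (g * h * g⁻¹)
    rw [act_single]
    exact single_mem_homogeneous rfl _ _
  φ_ρ g a b := by
    show trace A f (act A f g a * act A f g b) = trace A f (a * b)
    rw [← map_mul, trace_act]
  φ_fix g a ha := by
    obtain ⟨x, hx, rfl⟩ := mem_homogeneous.mp ha
    exact (act_single g g x hx).trans (single_congr (by simp) (A.φ_fix _ x hx))
  φ_comm g h a ha b hb := by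
    obtain ⟨x, hx, rfl⟩ := mem_homogeneous.mp ha
    obtain ⟨y, hy, rfl⟩ := mem_homogeneous.mp hb
    show act A f h (single A f g x hx) * single A f h y hy =
      single A f h y hy * single A f g x hx
    rw [act_single, single_mul_single, single_mul_single]
    exact single_congr (by group) (A.φ_comm _ _ x hx y hy)

end CrossedPAlgebra

open CrossedPAlgebra CrossedPAlgebra.Pullback in
/-- The pullback of a crossed algebra over a crossed module along a morphism of crossed modules. -/
def CrossedAlgebra.pullback {K : Type*} [Field K] {C P D Q : Type*}
    [Group C] [Group P] [Group D] [Group Q] [DecidableEq (Additive P)]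
    {ψ : P →* MulAut C} {δ : C →* P} {ψ' : Q →* MulAut D} {δ' : D →* Q}
    (f₁ : C →* D) (f₀ : P →* Q) (hsq : ∀ c : C, δ' (f₁ c) = f₀ (δ c))
    (hequiv : ∀ (p : P) (c : C), f₁ (ψ p c) = ψ' (f₀ p) (f₁ c))
    (hδ : ∀ (p : P) (c : C), δ (ψ p c) = p * δ c * p⁻¹)
    {L : Type*} [Ring L] [Algebra K L] (A : CrossedAlgebra K ψ' δ' L) :
    CrossedAlgebra K ψ δ (⨁ a, A.toCrossedPAlgebra.pullbackGrading f₀ a) where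
  __ := A.toCrossedPAlgebra.pullback f₀
  tilde c := single A.toCrossedPAlgebra f₀ (δ c) (A.tilde (f₁ c)) (hsq c ▸ A.tilde_mem (f₁ c))
  tilde_mem c := single_mem_homogeneous rfl _ _
  tilde_one := single_congr (map_one δ) (by rw [map_one, A.tilde_one])
  tilde_mul c c' := by
    rw [single_mul_single]
    exact single_congr (map_mul δ c c') (by rw [map_mul, A.tilde_mul])
  φ_tilde h c := (act_single h _ _ _).trans
    (single_congr (hδ h c).symm (by rw [A.φ_tilde, hequiv]))

/-- given a morphism `f = (f₁, f₀)` of crossed modules from `(C,P,δ)` to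
`(D,Q,δ')` and a crossed `𝒟`-algebra `L'`, the pullback `f₀*(L')` -- whose graded piece at
`p` is `L'_{f₀ p}`, with pairing inherited from `L'` on pieces of inverse grade (zero
otherwise), action `φ_h := φ'_{f₀ h}` and `c̃ := (f₁ c)~` placed in grade `δ c` -- is a
crossed `𝒞`-algebra. -/
theorem pullback_crossedAlgebra {K : Type*} [Field K] {C P D Q : Type*}
    [Group C] [Group P] [Group D] [Group Q]
    {ψ : P →* MulAut C} {δ : C →* P} {ψ' : Q →* MulAut D} {δ' : D →* Q}
    (hC : IsCrossedModule ψ δ) (hD : IsCrossedModule ψ' δ')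
    (f₁ : C →* D) (f₀ : P →* Q)
    (hsq : ∀ c : C, δ' (f₁ c) = f₀ (δ c))
    (hequiv : ∀ (p : P) (c : C), f₁ (ψ p c) = ψ' (f₀ p) (f₁ c))
    {L' : Type*} [Ring L'] [Algebra K L'] (A' : CrossedAlgebra K ψ' δ' L') :
    letI : DecidableEq (Additive P) := Classical.decEq _
    letI : SetLike.GradedMonoid (fun a : Additive P => A'.grading (f₀ (Additive.toMul a))) :=
      { one_mem := by
          show (1 : L') ∈ A'.grading (f₀ (1 : P))
          rw [map_one]; exact A'.one_mem
        mul_mem := fun {i j} {gi gj} hi hj => by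
          show gi * gj ∈ A'.grading (f₀ (Additive.toMul i * Additive.toMul j))
          rw [map_mul]; exact A'.mul_mem _ _ _ hi _ hj }
    ∃ A : CrossedAlgebra K ψ δ
        (⨁ a : Additive P, A'.grading (f₀ (Additive.toMul a))),
      (∀ p : P, A.grading p =
        LinearMap.range (DirectSum.lof K (Additive P)
          (fun a => A'.grading (f₀ (Additive.toMul a))) (Additive.ofMul p))) ∧
      (∀ (p : P) (x : A'.grading (f₀ p)) (y : A'.grading (f₀ p⁻¹)),
        A.ρ (DirectSum.lof K (Additive P) (fun a => A'.grading (f₀ (Additive.toMul a)))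
              (Additive.ofMul p) x)
            (DirectSum.lof K (Additive P) (fun a => A'.grading (f₀ (Additive.toMul a)))
              (Additive.ofMul p⁻¹) y) = A'.ρ (x : L') (y : L')) ∧
      (∀ (p r : P) (x : A'.grading (f₀ p)) (y : A'.grading (f₀ r)), r ≠ p⁻¹ →
        A.ρ (DirectSum.lof K (Additive P) (fun a => A'.grading (f₀ (Additive.toMul a)))
              (Additive.ofMul p) x)
            (DirectSum.lof K (Additive P) (fun a => A'.grading (f₀ (Additive.toMul a)))
              (Additive.ofMul r) y) = 0) ∧
      (∀ (h p : P) (x : A'.grading (f₀ p)),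
        ((A.φ h (DirectSum.lof K (Additive P) (fun a => A'.grading (f₀ (Additive.toMul a)))
              (Additive.ofMul p) x)) (Additive.ofMul (h * p * h⁻¹)) : L') =
          A'.φ (f₀ h) (x : L')) ∧
      (∀ c : C,
        ((A.tilde c) (Additive.ofMul (δ c)) : L') = A'.tilde (f₁ c)) := by
  let _ : DecidableEq (Additive P) := Classical.decEq _
  refine ⟨CrossedAlgebra.pullback f₁ f₀ hsq hequiv hC.equivariance A',
    fun p => rfl, fun p x y => ?_, fun p r x y hr => ?_, fun h p x => ?_, fun c => ?_⟩
  · exact CrossedPAlgebra.Pullback.trace_single_mul_single (mul_inv_cancel p)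
      (x : L') (y : L') x.2 y.2
  · exact (CrossedAlgebra.pullback f₁ f₀ hsq hequiv hC.equivariance A').ρ_graded p r
      (fun h => hr (eq_inv_of_mul_eq_one_right h)) _ ⟨x, rfl⟩ _ ⟨y, rfl⟩
  · refine Eq.trans ?_ (CrossedPAlgebra.Pullback.single_apply_self (h * p * h⁻¹) _
      (CrossedPAlgebra.Pullback.map_mem h p x.2))
    exact congrArg (fun z : ⨁ a, A'.toCrossedPAlgebra.pullbackGrading f₀ a =>
        ((z (Additive.ofMul (h * p * h⁻¹)) :
          A'.toCrossedPAlgebra.pullbackGrading f₀ (Additive.ofMul (h * p * h⁻¹))) : L'))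
      (CrossedPAlgebra.Pullback.act_single h p (x : L') x.2)
  · exact CrossedPAlgebra.Pullback.single_apply_self _ _ _
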